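/- arXiv:2305.12942 — 2 statements merged into one kernel-verified Lean document; each statement's English description precedes it below -/
import Mathlib

section
/- Let p and q be prime numbers with p ≠ 2. Then Γ(ℤ_p × ℤ_{q²}) is partitionable into global defensive alliances if and only if q ≠ 2; namely, ψ_g(Γ(ℤ_p × ℤ_{q²})) = 2 if q ≠ 2, and ψ_g(Γ(ℤ_p × ℤ_{q²})) = 1 if q = 2. -/
open Classical

/-- The set of zero-divisors of `R` (including `0`). -/
def zeroDivisorSet (R : Type*) [CommRing R] : Set R :=
  {x : R | ∃ y : R, y ≠ 0 ∧ x * y = 0}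

/-- Vertices of the zero-divisor graph: the nonzero zero-divisors of `R`. -/
abbrev ZDV (R : Type*) [CommRing R] : Type _ :=
  {x : R // x ≠ 0 ∧ ∃ y : R, y ≠ 0 ∧ x * y = 0}

/-- The zero-divisor graph `Γ(R)` of a commutative ring `R`: vertices are the nonzero
zero-divisors, and distinct vertices `x`, `y` are adjacent iff `x * y = 0`. -/
def zdGraph (R : Type*) [CommRing R] : SimpleGraph (ZDV R) where
  Adj a b := a ≠ b ∧ (a : R) * (b : R) = 0
  symm := by
    refine ⟨?_⟩
    intro a b h
    exact ⟨h.1.symm, by rw [mul_comm]; exact h.2⟩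
  loopless := by
    refine ⟨?_⟩
    intro a h
    exact h.1 rfl

/-- `degIn G S v` is the number of neighbors of `v` lying in `S`. -/
noncomputable def degIn {V : Type*} (G : SimpleGraph V) (S : Set V) (v : V) : ℕ :=
  Set.ncard {u : V | u ∈ S ∧ G.Adj v u}

/-- `S` is a dominating set: every vertex outside `S` has a neighbor in `S`. -/
def IsDominatingSet {V : Type*} (G : SimpleGraph V) (S : Set V) : Prop :=
  ∀ v ∉ S, ∃ u ∈ S, G.Adj v u

/-- `S` is a defensive alliance: `S` is nonempty and every `v ∈ S` satisfies
`deg_S(v) + 1 ≥ deg_{Sᶜ}(v)`. -/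
def IsDefensiveAlliance {V : Type*} (G : SimpleGraph V) (S : Set V) : Prop :=
  S.Nonempty ∧ ∀ v ∈ S, degIn G Sᶜ v ≤ degIn G S v + 1

/-- A global defensive alliance is a defensive alliance that is also a dominating set. -/
def IsGlobalDefensiveAlliance {V : Type*} (G : SimpleGraph V) (S : Set V) : Prop :=
  IsDefensiveAlliance G S ∧ IsDominatingSet G S

/-- `P` is a partition of the vertex set of `G` into global defensive alliances. -/
def IsGDAPartition {V : Type*} (G : SimpleGraph V) (P : Finset (Set V)) : Prop :=
  (∀ S ∈ P, IsGlobalDefensiveAlliance G S) ∧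
  (⋃₀ (P : Set (Set V)) = Set.univ) ∧
  ((P : Set (Set V)).Pairwise Disjoint)

/-- The global defensive alliance partition number `ψ_g(G)`: the maximum number of parts in
a partition of the vertex set into global defensive alliances. -/
noncomputable def psiG {V : Type*} (G : SimpleGraph V) : ℕ :=
  sSup {n : ℕ | ∃ P : Finset (Set V), IsGDAPartition G P ∧ P.card = n}

/-- `G` is partitionable into global defensive alliances iff `ψ_g(G) ≥ 2`. -/
def PartitionableGDA {V : Type*} (G : SimpleGraph V) : Prop :=
  2 ≤ psiG G

/-- The global defensive alliance number `γ_a(G)`: the minimum cardinality of a global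
defensive alliance. -/
noncomputable def gammaA {V : Type*} (G : SimpleGraph V) : ℕ :=
  sInf {n : ℕ | ∃ S : Set V, IsGlobalDefensiveAlliance G S ∧ S.ncard = n}

/-!
Pairing `v` with `-v`: when no vertex equals its negative, any set containing exactly one vertex of
each pair `{v, -v}` is a global defensive alliance, and so is its complement. Hence `ψ_g ≥ 2` for
rings of odd order.

Conversely, in `Γ(A × B)` with `A` a domain, let `b = (0, 1)`, whose neighbours are the `(x, 0)`.
In a partition into at least three parts, every part `S` contains some `(x, 0)`, and being an
alliance `S` contains about half of its neighbours; but these are the same `(0, y)` for every `x`,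
so three disjoint parts do not fit.

If `B` has four elements and a nonzero `t` with `t² = 0`, the vertices `(x, t)` are leaves attached
to `c = (0, t)`. A part `T` not containing `c` must contain all of them, so the part of `c` must
contain all the remaining neighbours `(x, 0)` of `c`. Then `b` has no neighbour in `T`: it has to
lie in `T`, but cannot, having more than one neighbour outside.
-/

section Graph

variable {V : Type*} {G : SimpleGraph V} {S : Set V}

theorem IsDefensiveAlliance.ncard_neighborSet_le [Finite V] (hS : IsDefensiveAlliance G S)
    {v : V} (hv : v ∈ S) : (G.neighborSet v).ncard ≤ 2 * (G.neighborSet v ∩ S).ncard + 1 := by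
  have hsplit := Set.ncard_inter_add_ncard_sdiff_eq_ncard (G.neighborSet v) S
  have hdef : (G.neighborSet v \ S).ncard ≤ (G.neighborSet v ∩ S).ncard + 1 := by
    rw [Set.sdiff_eq, Set.inter_comm, Set.inter_comm _ S]
    exact hS.2 v hv
  lia

theorem isGlobalDefensiveAlliance_univ [Nonempty V] : IsGlobalDefensiveAlliance G Set.univ :=
  ⟨⟨Set.univ_nonempty, fun v _ ↦ by simp [degIn]⟩, fun v hv ↦ (hv (Set.mem_univ v)).elim⟩

theorem isGDAPartition_singleton_univ [Nonempty V] : IsGDAPartition G {Set.univ} := by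
  simp [IsGDAPartition, isGlobalDefensiveAlliance_univ]

theorem isGDAPartition_pair_compl (hS : IsGlobalDefensiveAlliance G S)
    (hSc : IsGlobalDefensiveAlliance G Sᶜ) : IsGDAPartition G {S, Sᶜ} := by
  refine ⟨by simp [hS, hSc], by simp, ?_⟩
  rw [Finset.coe_pair, Set.pairwise_pair_of_symm]
  exact fun _ ↦ disjoint_compl_right

theorem isGlobalDefensiveAlliance_of_neg_eq_compl [Finite V] [Nonempty V] [InvolutiveNeg V]
    (hneg : ∀ v u, G.Adj v u → u ≠ -v → G.Adj v (-u)) (hadj : ∀ v, ∃ u, G.Adj v u)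
    (hS : -S = Sᶜ) : IsGlobalDefensiveAlliance G S := by
  have neg_mem {v : V} (hv : v ∉ S) : -v ∈ S := by rwa [← Set.mem_neg, hS]
  refine ⟨⟨?_, fun v _ ↦ ?_⟩, fun v hv ↦ ?_⟩
  · obtain ⟨v⟩ := ‹Nonempty V›
    by_cases hv : v ∈ S
    exacts [⟨v, hv⟩, ⟨-v, neg_mem hv⟩]
  · have hsub : {u | u ∈ Sᶜ ∧ G.Adj v u} ⊆ insert (-v) (-{u | u ∈ S ∧ G.Adj v u}) := by
      rintro u ⟨huS, hvu⟩
      exact or_iff_not_imp_left.2 fun huv ↦ ⟨neg_mem huS, hneg v u hvu huv⟩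
    calc degIn G Sᶜ v ≤ (insert (-v) (-{u | u ∈ S ∧ G.Adj v u})).ncard := Set.ncard_le_ncard hsub
      _ ≤ (-{u | u ∈ S ∧ G.Adj v u}).ncard + 1 := Set.ncard_insert_le _ _
      _ = degIn G S v + 1 := by rw [Set.ncard_neg, degIn]
  · obtain ⟨u, hvu⟩ := hadj v
    by_cases hu : u ∈ S
    · exact ⟨u, hu, hvu⟩
    · have huv : u ≠ -v := fun h ↦ hu (h ▸ neg_mem hv)
      exact ⟨-u, neg_mem hu, hneg v u hvu huv⟩

theorem exists_neg_eq_compl {α : Type*} [InvolutiveNeg α] (hne : ∀ x : α, -x ≠ x) :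
    ∃ S : Set α, -S = Sᶜ := by
  refine ⟨{x | WellOrderingRel x (-x)}, Set.ext fun x ↦ ?_⟩
  simp only [Set.mem_neg, Set.mem_ofPred_eq, Set.mem_compl_iff, neg_neg]
  refine ⟨fun h ↦ asymm h, fun h ↦ ?_⟩
  exact ((trichotomous_of WellOrderingRel x (-x)).resolve_left h).resolve_left (hne x).symm

theorem exists_isGDAPartition_card_eq_two_of_neg [Finite V] [Nonempty V]
    [InvolutiveNeg V] (hne : ∀ v : V, -v ≠ v) (hneg : ∀ v u, G.Adj v u → u ≠ -v → G.Adj v (-u))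
    (hadj : ∀ v, ∃ u, G.Adj v u) : ∃ P : Finset (Set V), IsGDAPartition G P ∧ P.card = 2 := by
  obtain ⟨S, hS⟩ := exists_neg_eq_compl hne
  have hSc : -Sᶜ = Sᶜᶜ := by rw [Set.compl_neg, hS]
  exact ⟨{S, Sᶜ}, isGDAPartition_pair_compl
    (isGlobalDefensiveAlliance_of_neg_eq_compl hneg hadj hS)
    (isGlobalDefensiveAlliance_of_neg_eq_compl hneg hadj hSc), Finset.card_pair ne_compl_self⟩

namespace IsGDAPartition

variable {P : Finset (Set V)}

theorem psiG_eq_card (hP : IsGDAPartition G P)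
    (hmax : ∀ Q : Finset (Set V), IsGDAPartition G Q → Q.card ≤ P.card) : psiG G = P.card :=
  IsGreatest.csSup_eq ⟨⟨P, hP, rfl⟩, by rintro _ ⟨Q, hQ, rfl⟩; exact hmax Q hQ⟩

theorem isPartition (hP : IsGDAPartition G P) : Setoid.IsPartition (P : Set (Set V)) := by
  refine Set.PairwiseDisjoint.isPartition_of_exists_of_ne_empty hP.2.2 (fun v ↦ ?_) fun h ↦ ?_
  · exact Set.mem_sUnion.1 (hP.2.1 ▸ Set.mem_univ v)
  · exact Set.not_nonempty_empty (hP.1 ∅ h).1.1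

theorem ncard_eq_sum_ncard_inter [Finite V] (hP : IsGDAPartition G P) (Y : Set V) :
    Y.ncard = ∑ S ∈ P, (Y ∩ S).ncard := by
  rw [hP.isPartition.ncard_eq_finsum Y, finsum_eq_sum_of_fintype]
  exact Finset.sum_coe_sort P fun S ↦ (Y ∩ S).ncard

theorem neighborSet_inter_nonempty_of_notMem (hP : IsGDAPartition G P) (hS : S ∈ P) {v : V}
    (hv : v ∉ S) : (G.neighborSet v ∩ S).Nonempty := by
  obtain ⟨u, hu, hvu⟩ := (hP.1 S hS).2 v hv
  exact ⟨u, hvu, hu⟩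

theorem neighborSet_inter_nonempty [Finite V] (hP : IsGDAPartition G P) (hcard : 2 < P.card)
    (hS : S ∈ P) (v : V) : (G.neighborSet v ∩ S).Nonempty := by
  refine (Classical.em (v ∈ S)).elim (fun hv ↦ ?_) (hP.neighborSet_inter_nonempty_of_notMem hS)
  have hothers : (P.erase S).card ≤ ∑ T ∈ P.erase S, (G.neighborSet v ∩ T).ncard := by
    rw [Finset.card_eq_sum_ones]
    refine Finset.sum_le_sum fun T hT ↦ ?_
    obtain ⟨hTS, hT⟩ := Finset.mem_erase.1 hT
    have hvT : v ∉ T := Set.disjoint_left.1 (hP.2.2 hS hT hTS.symm) hv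
    exact (Set.ncard_pos).2 (hP.neighborSet_inter_nonempty_of_notMem hT hvT)
  have hsum := hP.ncard_eq_sum_ncard_inter (G.neighborSet v)
  rw [← Finset.add_sum_erase P _ hS] at hsum
  rw [Finset.card_erase_of_mem hS] at hothers
  have hdef := (hP.1 S hS).1.ncard_neighborSet_le hv
  exact (Set.ncard_pos).1 (by lia)

theorem card_le_two_of_forall_neighborSet_eq [Finite V] (hP : IsGDAPartition G P) {b : V}
    {Y : Set V} (hY : 3 < Y.ncard) (hb : ∀ v ∈ G.neighborSet b, G.neighborSet v = Y) :
    P.card ≤ 2 := by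
  by_contra! hcard
  have hlower : ∀ S ∈ P, Y.ncard ≤ 2 * (Y ∩ S).ncard + 1 := fun S hS ↦ by
    obtain ⟨v, hbv, hvS⟩ := hP.neighborSet_inter_nonempty hcard hS b
    rw [← hb v hbv]
    exact (hP.1 S hS).1.ncard_neighborSet_le hvS
  have hsum : P.card * Y.ncard ≤ 2 * Y.ncard + P.card :=
    calc P.card * Y.ncard = ∑ _S ∈ P, Y.ncard := by rw [Finset.sum_const, smul_eq_mul]
      _ ≤ ∑ S ∈ P, (2 * (Y ∩ S).ncard + 1) := Finset.sum_le_sum hlower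
      _ = 2 * Y.ncard + P.card := by
        rw [Finset.sum_add_distrib, ← Finset.mul_sum, ← hP.ncard_eq_sum_ncard_inter,
          ← Finset.card_eq_sum_ones]
  nlinarith

theorem card_le_one_of_leaves [Finite V] (hP : IsGDAPartition G P) {b c : V}
    (hb : 1 < (G.neighborSet b).ncard)
    (hbc : 2 * (G.neighborSet b).ncard ≤ (G.neighborSet c).ncard)
    (hleaf : ∀ d ∈ G.neighborSet c \ G.neighborSet b, G.neighborSet d = {c}) : P.card ≤ 1 := by
  by_contra! hcard
  obtain ⟨S, hS, hcS⟩ := Set.mem_sUnion.1 (hP.2.1 ▸ Set.mem_univ c)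
  obtain ⟨T, hT, hTS⟩ := Finset.exists_mem_ne hcard S
  have hST : Disjoint S T := hP.2.2 hS hT hTS.symm
  have hleaf_mem : ∀ d ∈ G.neighborSet c \ G.neighborSet b, d ∈ T := fun d hd ↦ by
    by_contra hdT
    obtain ⟨u, hdu, huT⟩ := hP.neighborSet_inter_nonempty_of_notMem hT hdT
    rw [hleaf d hd] at hdu
    exact Set.disjoint_left.1 hST hcS (hdu ▸ huT)
  have hcb : G.neighborSet c ∩ S ⊆ G.neighborSet b ∩ S := fun v ⟨hcv, hvS⟩ ↦ by
    refine ⟨?_, hvS⟩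
    by_contra hbv
    exact Set.disjoint_left.1 hST hvS (hleaf_mem v ⟨hcv, hbv⟩)
  have hbS : G.neighborSet b ⊆ S := by
    have hdef := (hP.1 S hS).1.ncard_neighborSet_le hcS
    have hle := Set.ncard_le_ncard hcb
    exact Set.inter_eq_left.1 (Set.eq_of_subset_of_ncard_le Set.inter_subset_left (by lia))
  have hbT : G.neighborSet b ∩ T = ∅ := (hST.mono_left hbS).inter_eq
  have hbmem : b ∈ T := by
    by_contra hbT'
    exact (hP.neighborSet_inter_nonempty_of_notMem hT hbT').ne_empty hbT
  have hdef := (hP.1 T hT).1.ncard_neighborSet_le hbmem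
  rw [hbT, Set.ncard_empty] at hdef
  lia

end IsGDAPartition

end Graph

section ZeroDivisorGraph

variable {R : Type*} [CommRing R]

/-- Negation of vertices of the zero-divisor graph, the symmetry along which the vertex set is
split into two halves. -/
instance : InvolutiveNeg (ZDV R) where
  neg v := ⟨-v.1, neg_ne_zero.2 v.2.1,
    v.2.2.imp fun y hy ↦ ⟨hy.1, by rw [neg_mul, hy.2, neg_zero]⟩⟩
  neg_neg v := Subtype.ext (neg_neg v.1)

theorem zdGraph_adj_neg_right {v u : ZDV R} (hvu : (zdGraph R).Adj v u) (huv : u ≠ -v) :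
    (zdGraph R).Adj v (-u) :=
  ⟨fun h ↦ huv (neg_eq_iff_eq_neg.1 h.symm), (mul_neg v.1 u.1).trans (neg_eq_zero.2 hvu.2)⟩

theorem exists_zdGraph_adj (hne : ∀ v : ZDV R, -v ≠ v) (v : ZDV R) :
    ∃ u, (zdGraph R).Adj v u := by
  obtain ⟨w, hw, hvw⟩ := v.2.2
  by_cases hwv : v.1 = w
  · exact ⟨-v, (hne v).symm, (mul_neg v.1 v.1).trans (neg_eq_zero.2 (by rwa [← hwv] at hvw))⟩
  · exact ⟨⟨w, hw, v.1, v.2.1, by rwa [mul_comm]⟩, fun h ↦ hwv (congrArg Subtype.val h), hvw⟩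

theorem image_val_neighborSet_zdGraph (v : ZDV R) :
    Subtype.val '' (zdGraph R).neighborSet v = {x | x ≠ 0 ∧ x ≠ v.1 ∧ v.1 * x = 0} := by
  ext x
  constructor
  · rintro ⟨u, ⟨hvu, hmul⟩, rfl⟩
    exact ⟨u.2.1, fun h ↦ hvu (Subtype.ext h.symm), hmul⟩
  · rintro ⟨hx, hxv, hmul⟩
    exact ⟨⟨x, hx, v.1, v.2.1, by rwa [mul_comm]⟩,
      ⟨fun h ↦ hxv (congrArg Subtype.val h).symm, hmul⟩, rfl⟩

theorem ncard_image_val_neighborSet_zdGraph (v : ZDV R) :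
    (Subtype.val '' (zdGraph R).neighborSet v).ncard = ((zdGraph R).neighborSet v).ncard :=
  Set.ncard_image_of_injective _ Subtype.val_injective

end ZeroDivisorGraph

section Product

variable {A B : Type*} [CommRing A] [CommRing B]

/-- The vertex `(0, y)` of `Γ(A × B)`. -/
def ZDV.inr [Nontrivial A] {y : B} (hy : y ≠ 0) : ZDV (A × B) :=
  ⟨(0, y), by simp [hy], (1, 0), by simp, by simp⟩

theorem mem_image_val_neighborSet_prod {v : ZDV (A × B)} {x : A} {y : B} :
    (x, y) ∈ Subtype.val '' (zdGraph (A × B)).neighborSet v ↔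
      ¬(x = 0 ∧ y = 0) ∧ ¬(x = v.1.1 ∧ y = v.1.2) ∧ v.1.1 * x = 0 ∧ v.1.2 * y = 0 := by
  simp [image_val_neighborSet_zdGraph, Prod.ext_iff]

theorem image_val_neighborSet_inr_one [Nontrivial A] [Nontrivial B] :
    Subtype.val '' (zdGraph (A × B)).neighborSet (ZDV.inr one_ne_zero) = {0}ᶜ ×ˢ {0} := by
  ext ⟨x, y⟩
  simp only [mem_image_val_neighborSet_prod, ZDV.inr, Set.mem_prod, Set.mem_compl_iff,
    Set.mem_singleton_iff]
  grind

theorem image_val_neighborSet_of_snd_eq_zero [NoZeroDivisors A] {v : ZDV (A × B)}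
    (hv : v.1.2 = 0) : Subtype.val '' (zdGraph (A × B)).neighborSet v = {0} ×ˢ {0}ᶜ := by
  have hv₁ : v.1.1 ≠ 0 := fun h ↦ v.2.1 (Prod.ext h hv)
  ext ⟨x, y⟩
  simp only [mem_image_val_neighborSet_prod, mul_eq_zero_iff_left hv₁, hv, zero_mul, Set.mem_prod,
    Set.mem_compl_iff, Set.mem_singleton_iff]
  grind

theorem image_val_neighborSet_inr_of_annihilator [Nontrivial A] {t : B} (ht₀ : t ≠ 0)
    (ht : ∀ y, t * y = 0 ↔ y = 0 ∨ y = t) :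
    Subtype.val '' (zdGraph (A × B)).neighborSet (ZDV.inr ht₀) = {0}ᶜ ×ˢ {0, t} := by
  ext ⟨x, y⟩
  simp only [mem_image_val_neighborSet_prod, ZDV.inr, zero_mul, ht, Set.mem_prod,
    Set.mem_compl_iff, Set.mem_singleton_iff, Set.mem_insert_iff]
  grind

theorem image_val_neighborSet_of_snd_eq_of_annihilator [NoZeroDivisors A] {t : B} (ht₀ : t ≠ 0)
    (ht : ∀ y, t * y = 0 ↔ y = 0 ∨ y = t) {v : ZDV (A × B)} (hv₁ : v.1.1 ≠ 0) (hv₂ : v.1.2 = t) :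
    Subtype.val '' (zdGraph (A × B)).neighborSet v = {(0, t)} := by
  ext ⟨x, y⟩
  simp only [mem_image_val_neighborSet_prod, mul_eq_zero_iff_left hv₁, hv₂, ht,
    Set.mem_singleton_iff, Prod.mk.injEq]
  grind

end Product

theorem eq_zero_of_neg_eq_self {M : Type*} [AddGroup M] (hM : Odd (Nat.card M)) {x : M}
    (hx : -x = x) : x = 0 := by
  apply (nsmulCoprime (Nat.coprime_two_right.2 hM)).injective
  simp [nsmulCoprime_apply, two_nsmul, ← neg_eq_iff_add_eq_zero, hx]

theorem exists_annihilator_eq_pair {B : Type*} [CommRing B] (hB : Nat.card B = 4)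
    (hred : ¬IsReduced B) : ∃ t : B, t ≠ 0 ∧ ∀ y, t * y = 0 ↔ y = 0 ∨ y = t := by
  have : Finite B := Nat.finite_of_card_ne_zero (by lia)
  rw [isReduced_iff_pow_one_lt 2 one_lt_two] at hred
  push Not at hred
  obtain ⟨t, htsq, ht₀⟩ := hred
  let K : AddSubgroup B := (AddMonoidHom.mulLeft t).ker
  have hpair : ({0, t} : Set B) ⊆ K :=
    Set.pair_subset K.zero_mem (show t * t = 0 by rw [← sq, htsq])
  have hKtop : K ≠ ⊤ := fun h ↦ ht₀ <| by
    have h1 : (1 : B) ∈ K := h ▸ AddSubgroup.mem_top 1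
    rwa [← mul_one t]
  have hKcard : (K : Set B).ncard ≤ ({0, t} : Set B).ncard := by
    have hdvd : Nat.card K ∣ 2 ^ 2 := by simpa only [hB] using! K.card_addSubgroup_dvd_card
    obtain ⟨k, hk, hcard⟩ := (Nat.dvd_prime_pow Nat.prime_two).1 hdvd
    have hk2 : k ≠ 2 := fun h ↦ hKtop (AddSubgroup.eq_top_of_card_eq K (by rw [hcard, h, hB]; rfl))
    rw [Set.ncard_pair ht₀.symm]
    exact hcard.trans_le (Nat.pow_le_pow_right two_pos (by lia : k ≤ 1))
  have hK : ({0, t} : Set B) = K := Set.eq_of_subset_of_ncard_le hpair hKcard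
  exact ⟨t, ht₀, fun y ↦ (Set.ext_iff.1 hK y).symm⟩

section Product

variable {A B : Type*} [CommRing A] [IsDomain A] [CommRing B]

theorem psiG_zdGraph_prod_eq_two (hA : Odd (Nat.card A)) (hB : Odd (Nat.card B))
    (hB4 : 4 < Nat.card B) : psiG (zdGraph (A × B)) = 2 := by
  have : Finite A := Nat.finite_of_card_ne_zero hA.pos.ne'
  have : Finite B := Nat.finite_of_card_ne_zero hB.pos.ne'
  have : Nontrivial B := Finite.one_lt_card_iff_nontrivial.1 (by lia)
  let a : ZDV (A × B) := ⟨(1, 0), by simp, (0, 1), by simp, by simp⟩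
  have : Nonempty (ZDV (A × B)) := ⟨a⟩
  have hne : ∀ v : ZDV (A × B), -v ≠ v := fun v hv ↦ by
    have hodd : Odd (Nat.card (A × B)) := Nat.card_prod A B ▸ hA.mul hB
    exact v.2.1 (eq_zero_of_neg_eq_self hodd (congrArg Subtype.val hv))
  obtain ⟨P, hP, hPcard⟩ := exists_isGDAPartition_card_eq_two_of_neg hne
    (fun _ _ ↦ zdGraph_adj_neg_right) (exists_zdGraph_adj hne)
  rw [← hPcard]
  refine hP.psiG_eq_card fun Q hQ ↦ hPcard ▸ ?_
  refine hQ.card_le_two_of_forall_neighborSet_eq (b := ZDV.inr one_ne_zero)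
    (Y := (zdGraph (A × B)).neighborSet a) ?_ fun v hv ↦ ?_
  · rw [← ncard_image_val_neighborSet_zdGraph, image_val_neighborSet_of_snd_eq_zero rfl,
      Set.ncard_prod, Set.ncard_compl, Set.ncard_singleton, Set.ncard_singleton]
    lia
  · rw [← Subtype.val_injective.mem_set_image, image_val_neighborSet_inr_one] at hv
    apply Subtype.val_injective.image_injective
    rw [image_val_neighborSet_of_snd_eq_zero hv.2, image_val_neighborSet_of_snd_eq_zero rfl]

theorem psiG_zdGraph_prod_eq_one (hA : 2 < Nat.card A) (hB : Nat.card B = 4)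
    (hred : ¬IsReduced B) : psiG (zdGraph (A × B)) = 1 := by
  have : Finite A := Nat.finite_of_card_ne_zero (by lia)
  have : Finite B := Nat.finite_of_card_ne_zero (by lia)
  have : Nontrivial B := Finite.one_lt_card_iff_nontrivial.1 (by lia)
  obtain ⟨t, ht₀, ht⟩ := exists_annihilator_eq_pair hB hred
  let b : ZDV (A × B) := ZDV.inr one_ne_zero
  let c : ZDV (A × B) := ZDV.inr ht₀
  have hbN : ((zdGraph (A × B)).neighborSet b).ncard = Nat.card A - 1 := by
    rw [← ncard_image_val_neighborSet_zdGraph, image_val_neighborSet_inr_one, Set.ncard_prod,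
      Set.ncard_compl, Set.ncard_singleton, Set.ncard_singleton, mul_one]
  have hcN : ((zdGraph (A × B)).neighborSet c).ncard = (Nat.card A - 1) * 2 := by
    rw [← ncard_image_val_neighborSet_zdGraph, image_val_neighborSet_inr_of_annihilator ht₀ ht,
      Set.ncard_prod, Set.ncard_compl, Set.ncard_singleton, Set.ncard_pair ht₀.symm]
  have : Nonempty (ZDV (A × B)) := ⟨b⟩
  refine isGDAPartition_singleton_univ.psiG_eq_card fun Q hQ ↦ ?_
  refine hQ.card_le_one_of_leaves (b := b) (c := c) (by lia) (by lia) fun d ⟨hcd, hbd⟩ ↦ ?_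
  rw [← Subtype.val_injective.mem_set_image, image_val_neighborSet_inr_of_annihilator ht₀ ht] at hcd
  rw [← Subtype.val_injective.mem_set_image, image_val_neighborSet_inr_one] at hbd
  have hd₂ : d.1.2 = t := hcd.2.resolve_left fun h ↦ hbd ⟨hcd.1, h⟩
  apply Subtype.val_injective.image_injective
  rw [image_val_neighborSet_of_snd_eq_of_annihilator ht₀ ht hcd.1 hd₂, Set.image_singleton]
  rfl

end Product

theorem stmt11_general {A B : Type*} [CommRing A] [IsDomain A] [CommRing B]
    (hA : Odd (Nat.card A))
    (hB : Nat.card B = 4 ∧ ¬IsReduced B ∨ Odd (Nat.card B) ∧ 4 < Nat.card B) :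
    (PartitionableGDA (zdGraph (A × B)) ↔ Nat.card B ≠ 4) ∧
    (Nat.card B ≠ 4 → psiG (zdGraph (A × B)) = 2) ∧
    (Nat.card B = 4 → psiG (zdGraph (A × B)) = 1) := by
  rcases hB with ⟨hcard, hred⟩ | ⟨hodd, hcard⟩
  · have : Finite A := Nat.finite_of_card_ne_zero hA.pos.ne'
    have hA_two : 2 < Nat.card A := by
      have := Finite.one_lt_card (α := A)
      grind
    simp [PartitionableGDA, psiG_zdGraph_prod_eq_one hA_two hcard hred, hcard]
  · simp [PartitionableGDA, psiG_zdGraph_prod_eq_two hA hodd hcard, hcard.ne']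

theorem card_zmod_sq_eq_four_iff {q : ℕ} : Nat.card (ZMod (q ^ 2)) = 4 ↔ q = 2 := by
  rw [Nat.card_zmod]
  exact Nat.pow_left_inj two_ne_zero (b := 2)

theorem card_zmod_sq_eq_four_or_odd {q : ℕ} (hq : q.Prime) :
    Nat.card (ZMod (q ^ 2)) = 4 ∧ ¬IsReduced (ZMod (q ^ 2)) ∨
      Odd (Nat.card (ZMod (q ^ 2))) ∧ 4 < Nat.card (ZMod (q ^ 2)) := by
  simp only [Nat.card_zmod, isReduced_zmod]
  rcases hq.eq_two_or_odd' with rfl | hodd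
  · exact Or.inl ⟨rfl, by decide⟩
  · have hq2 : 2 < q := hq.two_le.lt_of_ne (by rintro rfl; exact absurd hodd (by decide))
    exact Or.inr ⟨hodd.pow, Nat.pow_lt_pow_left hq2 two_ne_zero⟩

/-- For primes `p, q` with `p ≠ 2`: `Γ(ℤ_p × ℤ_{q²})` is partitionable into
global defensive alliances iff `q ≠ 2`; namely `ψ_g = 2` if `q ≠ 2` and `ψ_g = 1` if
`q = 2`. -/
theorem stmt11 (p q : ℕ) (hp : p.Prime) (hq : q.Prime) (hp2 : p ≠ 2) :
    (PartitionableGDA (zdGraph (ZMod p × ZMod (q ^ 2))) ↔ q ≠ 2) ∧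
    (q ≠ 2 → psiG (zdGraph (ZMod p × ZMod (q ^ 2))) = 2) ∧
    (q = 2 → psiG (zdGraph (ZMod p × ZMod (q ^ 2))) = 1) := by
  have : Fact p.Prime := ⟨hp⟩
  simpa only [ne_eq, card_zmod_sq_eq_four_iff] using stmt11_general (A := ZMod p)
    (by simpa using hp.odd_of_ne_two hp2) (card_zmod_sq_eq_four_or_odd hq)
end

section
/- Let F and K be finite fields with |F| ≥ 3 and |K| ≥ 3. Then Γ(ℤ₂ × F × K) is not partitionable into global defensive alliances. -/
open Classical

/-!
Suppose `Γ(ℤ₂ × F × K)` has two disjoint global defensive alliances `S` and `T`, with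
`e = (1, 0, 0)` in `S`. The `(|F| - 1)(|K| - 1)` vertices `(0, a, b)` with `a, b ≠ 0` have `e` as
their only neighbor, so `T`, which must dominate them, contains them all. Moreover `T` meets the
neighborhoods of `(1, 1, 0)` and `(1, 0, 1)`, which are disjoint subsets of that of `e` and have at
least two elements each. So at least `(|F| - 1)(|K| - 1) + 2` of the `|F||K| - 1` neighbors of `e`
lie outside `S`: too many for `S` to be a defensive alliance.
-/

section Alliance

variable {V : Type*} {G : SimpleGraph V} {S T : Set V} {u v : V}

lemma degIn_mono [Finite V] (h : S ⊆ T) : degIn G S v ≤ degIn G T v :=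
  Set.ncard_le_ncard fun _ hu => ⟨h hu.1, hu.2⟩

lemma degIn_add_degIn_compl [Finite V] (G : SimpleGraph V) (S : Set V) (v : V) :
    degIn G S v + degIn G Sᶜ v = (G.neighborSet v).ncard := by
  have hS : {u | u ∈ S ∧ G.Adj v u} = G.neighborSet v ∩ S := Set.inter_comm _ _
  have hSc : {u | u ∈ Sᶜ ∧ G.Adj v u} = G.neighborSet v \ S := Set.inter_comm _ _
  rw [degIn, degIn, hS, hSc, Set.ncard_inter_add_ncard_sdiff_eq_ncard]

lemma IsDefensiveAlliance.two_mul_degIn_compl_le [Finite V] (hS : IsDefensiveAlliance G S)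
    (hv : v ∈ S) : 2 * degIn G Sᶜ v ≤ (G.neighborSet v).ncard + 1 := by
  have hle := hS.2 v hv
  have hadd := degIn_add_degIn_compl G S v
  lia

lemma IsGlobalDefensiveAlliance.exists_mem_adj [Finite V] (hS : IsGlobalDefensiveAlliance G S)
    (hv : 1 < (G.neighborSet v).ncard) : ∃ u ∈ S, G.Adj v u := by
  by_cases hvS : v ∈ S
  · have hle := hS.1.2 v hvS
    have hadd := degIn_add_degIn_compl G S v
    have hpos : degIn G S v ≠ 0 := by lia
    exact Set.nonempty_of_ncard_ne_zero hpos
  · exact hS.2 v hvS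

/-- The pendant vertices (leaves) attached to `v`: those whose only neighbor is `v`. They are
forced into every dominating set that misses `v`. -/
def pendantSet (G : SimpleGraph V) (v : V) : Set V :=
  {u | G.neighborSet u = {v}}

lemma adj_of_mem_pendantSet (hu : u ∈ pendantSet G v) : G.Adj v u :=
  G.adj_symm (show v ∈ G.neighborSet u from hu.superset rfl)

lemma IsDominatingSet.pendantSet_subset (hT : IsDominatingSet G T) (hv : v ∉ T) :
    pendantSet G v ⊆ T := by
  intro u hu
  by_contra huT
  obtain ⟨w, hwT, huw⟩ := hT u huT
  have hwv : w = v := hu.subset huw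
  exact hv (hwv ▸ hwT)

lemma IsGlobalDefensiveAlliance.ncard_pendantSet_add_ncard_le_degIn [Finite V] {D : Set V}
    (hT : IsGlobalDefensiveAlliance G T) (hvT : v ∉ T) (hvD : v ∉ D)
    (hsub : ∀ d ∈ D, G.neighborSet d ⊆ G.neighborSet v)
    (htwo : ∀ d ∈ D, 1 < (G.neighborSet d).ncard) (hdisj : D.PairwiseDisjoint G.neighborSet) :
    (pendantSet G v).ncard + D.ncard ≤ degIn G T v := by
  choose! f hfT hf using fun d hd => hT.exists_mem_adj (htwo d hd)
  have hinj : Set.InjOn f D := fun d hd d' hd' h =>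
    hdisj.elim_set hd hd' (f d) (hf d hd) (h ▸ hf d' hd')
  have hdisj' : Disjoint (pendantSet G v) (f '' D) := by
    rw [Set.disjoint_right]
    rintro _ ⟨d, hd, rfl⟩ hpendant
    have hdv : d = v := hpendant.subset (hf d hd).symm
    exact hvD (hdv ▸ hd)
  rw [← hinj.ncard_image, ← Set.ncard_union_eq hdisj']
  refine Set.ncard_le_ncard (Set.union_subset (fun u hu => ?_) ?_)
  · exact ⟨hT.2.pendantSet_subset hvT hu, adj_of_mem_pendantSet hu⟩
  · rintro _ ⟨d, hd, rfl⟩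
    exact ⟨hfT d hd, hsub d hd (hf d hd)⟩

lemma PartitionableGDA.exists_disjoint (hG : PartitionableGDA G) (v : V) :
    ∃ S T, IsGlobalDefensiveAlliance G S ∧ IsGlobalDefensiveAlliance G T ∧ Disjoint S T ∧
      v ∈ S := by
  obtain ⟨_, ⟨P, ⟨hgda, hcover, hdisj⟩, rfl⟩, hcard⟩ :=
    exists_lt_of_lt_csSup' (Nat.lt_of_succ_le hG)
  obtain ⟨S, hSP, hvS⟩ := Set.mem_sUnion.1 (hcover ▸ Set.mem_univ v)
  obtain ⟨T, hTP, hTS⟩ := Finset.exists_mem_ne hcard S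
  exact ⟨S, T, hgda S hSP, hgda T hTP, hdisj hSP hTP hTS.symm, hvS⟩

theorem not_partitionableGDA_of_ncard_neighborSet_lt [Finite V] {D : Set V} (hvD : v ∉ D)
    (hsub : ∀ d ∈ D, G.neighborSet d ⊆ G.neighborSet v)
    (htwo : ∀ d ∈ D, 1 < (G.neighborSet d).ncard) (hdisj : D.PairwiseDisjoint G.neighborSet)
    (hlt : (G.neighborSet v).ncard + 1 < 2 * ((pendantSet G v).ncard + D.ncard)) :
    ¬ PartitionableGDA G := by
  intro hG
  obtain ⟨S, T, hS, hT, hST, hvS⟩ := hG.exists_disjoint v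
  have hvT : v ∉ T := Set.disjoint_left.1 hST hvS
  have hle : 2 * ((pendantSet G v).ncard + D.ncard) ≤ (G.neighborSet v).ncard + 1 :=
    calc 2 * ((pendantSet G v).ncard + D.ncard)
        ≤ 2 * degIn G T v := by
          gcongr
          exact hT.ncard_pendantSet_add_ncard_le_degIn hvT hvD hsub htwo hdisj
      _ ≤ 2 * degIn G Sᶜ v := by
          gcongr
          exact degIn_mono hST.subset_compl_left
      _ ≤ (G.neighborSet v).ncard + 1 := hS.1.two_mul_degIn_compl_le hvS
  exact hle.not_gt hlt

end Alliance

section ZeroDivisorGraph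

variable {R : Type*} [CommRing R] {x y : ZDV R}

lemma mem_neighborSet_zdGraph_iff (hx : (x : R) * x ≠ 0) :
    y ∈ (zdGraph R).neighborSet x ↔ (x : R) * y = 0 :=
  ⟨And.right, fun h => ⟨fun hxy => hx (by rwa [← hxy] at h), h⟩⟩

lemma ncard_neighborSet_zdGraph_add_one (hx : (x : R) * x ≠ 0)
    (hfin : {r : R | (x : R) * r = 0}.Finite) :
    ((zdGraph R).neighborSet x).ncard + 1 = {r : R | (x : R) * r = 0}.ncard := by
  have himage : Subtype.val '' (zdGraph R).neighborSet x = {r : R | (x : R) * r = 0} \ {0} := by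
    ext r
    constructor
    · rintro ⟨y, hy, rfl⟩
      exact ⟨hy.2, y.2.1⟩
    · rintro ⟨hxr, hr⟩
      refine ⟨⟨r, hr, x, x.2.1, by rwa [mul_comm]⟩, ?_, rfl⟩
      exact (mem_neighborSet_zdGraph_iff hx).2 hxr
  rw [← Set.ncard_image_of_injective _ Subtype.val_injective, himage]
  exact Set.ncard_sdiff_singleton_add_one (mul_zero (x : R)) hfin

lemma neighborSet_zdGraph_subset_of_dvd (hy : (y : R) * y ≠ 0) (hxy : (x : R) ∣ y) :
    (zdGraph R).neighborSet x ⊆ (zdGraph R).neighborSet y := by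
  rintro z ⟨-, hxz⟩
  have hdvd : (x : R) * z ∣ y * z := mul_dvd_mul_right hxy z
  rw [hxz, zero_dvd_iff] at hdvd
  exact (mem_neighborSet_zdGraph_iff hy).2 hdvd

lemma disjoint_neighborSet_zdGraph_of_isCoprime (hxy : IsCoprime (x : R) y) :
    Disjoint ((zdGraph R).neighborSet x) ((zdGraph R).neighborSet y) := by
  rw [Set.disjoint_left]
  rintro z ⟨-, hxz⟩ ⟨-, hyz⟩
  obtain ⟨a, b, hab⟩ := hxy
  refine z.2.1 ?_
  calc (z : R) = (a * x + b * y) * z := by rw [hab, one_mul]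
    _ = a * (x * z) + b * (y * z) := by ring
    _ = 0 := by rw [hxz, hyz, mul_zero, mul_zero, add_zero]

end ZeroDivisorGraph

section TripleProduct

variable (R A B : Type*) [CommRing R] [Nontrivial R] [CommRing A] [Nontrivial A]
  [CommRing B] [Nontrivial B]

/-- The idempotent `(1, 0, 0)` as a vertex of `Γ(R × A × B)`; its neighbors are the nonzero
`(0, a, b)`. -/
def vertex100 : ZDV (R × A × B) :=
  ⟨(1, 0, 0), by simp, (0, 1, 1), by simp, by simp⟩

/-- The idempotent `(1, 1, 0)` as a vertex of `Γ(R × A × B)`; its neighbors are the nonzero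
`(0, 0, b)`. -/
def vertex110 : ZDV (R × A × B) :=
  ⟨(1, 1, 0), by simp, (0, 0, 1), by simp, by simp⟩

/-- The idempotent `(1, 0, 1)` as a vertex of `Γ(R × A × B)`; its neighbors are the nonzero
`(0, a, 0)`. -/
def vertex101 : ZDV (R × A × B) :=
  ⟨(1, 0, 1), by simp, (0, 1, 0), by simp, by simp⟩

lemma vertex100_ne_vertex110 : vertex100 R A B ≠ vertex110 R A B := by
  simp [vertex100, vertex110]

lemma vertex100_ne_vertex101 : vertex100 R A B ≠ vertex101 R A B := by
  simp [vertex100, vertex101]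

lemma vertex110_ne_vertex101 : vertex110 R A B ≠ vertex101 R A B := by
  simp [vertex110, vertex101]

lemma ncard_neighborSet_vertex100_add_one [Finite A] [Finite B] :
    ((zdGraph (R × A × B)).neighborSet (vertex100 R A B)).ncard + 1 =
      Nat.card A * Nat.card B := by
  have hann : {r | (vertex100 R A B : R × A × B) * r = 0} =
      {0} ×ˢ (Set.univ : Set A) ×ˢ (Set.univ : Set B) := by
    ext ⟨r, a, b⟩
    simp [vertex100]
  rw [ncard_neighborSet_zdGraph_add_one (by simp [vertex100]) (hann ▸ Set.toFinite _), hann]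
  simp only [Set.ncard_prod, Set.ncard_singleton, Set.ncard_univ, one_mul]

lemma ncard_neighborSet_vertex110_add_one [Finite B] :
    ((zdGraph (R × A × B)).neighborSet (vertex110 R A B)).ncard + 1 = Nat.card B := by
  have hann : {r | (vertex110 R A B : R × A × B) * r = 0} =
      {0} ×ˢ {0} ×ˢ (Set.univ : Set B) := by
    ext ⟨r, a, b⟩
    simp [vertex110]
  rw [ncard_neighborSet_zdGraph_add_one (by simp [vertex110]) (hann ▸ Set.toFinite _), hann]
  simp only [Set.ncard_prod, Set.ncard_singleton, Set.ncard_univ, one_mul]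

lemma ncard_neighborSet_vertex101_add_one [Finite A] :
    ((zdGraph (R × A × B)).neighborSet (vertex101 R A B)).ncard + 1 = Nat.card A := by
  have hann : {r | (vertex101 R A B : R × A × B) * r = 0} =
      {0} ×ˢ (Set.univ : Set A) ×ˢ {0} := by
    ext ⟨r, a, b⟩
    simp [vertex101]
  rw [ncard_neighborSet_zdGraph_add_one (by simp [vertex101]) (hann ▸ Set.toFinite _), hann]
  simp only [Set.ncard_prod, Set.ncard_singleton, Set.ncard_univ, one_mul, mul_one]

lemma neighborSet_vertex110_subset :
    (zdGraph (R × A × B)).neighborSet (vertex110 R A B) ⊆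
      (zdGraph (R × A × B)).neighborSet (vertex100 R A B) :=
  neighborSet_zdGraph_subset_of_dvd (by simp [vertex100])
    ⟨(1, 0, 0), by simp [vertex100, vertex110]⟩

lemma neighborSet_vertex101_subset :
    (zdGraph (R × A × B)).neighborSet (vertex101 R A B) ⊆
      (zdGraph (R × A × B)).neighborSet (vertex100 R A B) :=
  neighborSet_zdGraph_subset_of_dvd (by simp [vertex100])
    ⟨(1, 0, 0), by simp [vertex100, vertex101]⟩

lemma disjoint_neighborSet_vertex110_vertex101 :
    Disjoint ((zdGraph (R × A × B)).neighborSet (vertex110 R A B))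
      ((zdGraph (R × A × B)).neighborSet (vertex101 R A B)) :=
  disjoint_neighborSet_zdGraph_of_isCoprime
    ⟨(1, 1, 0), (0, 0, 1), by simp [vertex110, vertex101]⟩

end TripleProduct

section PendantVertices

variable {A B : Type*} [CommRing A] [IsDomain A] [CommRing B] [IsDomain B]

lemma mem_pendantSet_vertex100 {a : A} {b : B} (ha : a ≠ 0) (hb : b ≠ 0)
    {x : ZDV (ZMod 2 × A × B)} (hx : (x : ZMod 2 × A × B) = (0, a, b)) :
    x ∈ pendantSet (zdGraph (ZMod 2 × A × B)) (vertex100 (ZMod 2) A B) := by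
  refine Set.Subset.antisymm ?_ (Set.singleton_subset_iff.2 ⟨?_, by simp [hx, vertex100]⟩)
  · rintro ⟨⟨r, c, d⟩, hne, _⟩ ⟨-, hmul⟩
    obtain ⟨rfl, rfl⟩ : c = 0 ∧ d = 0 := by simpa [hx, ha, hb] using hmul
    have hr0 : r ≠ 0 := by simpa using hne
    have hr : r = 1 := Fin.eq_one_of_ne_zero r hr0
    exact Subtype.ext (by simp only [hr, vertex100])
  · rintro rfl
    simp [vertex100] at hx

lemma card_sub_one_mul_card_sub_one_le_ncard_pendantSet [Finite A] [Finite B] :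
    (Nat.card A - 1) * (Nat.card B - 1) ≤
      (pendantSet (zdGraph (ZMod 2 × A × B)) (vertex100 (ZMod 2) A B)).ncard := by
  have hsub : ({0} ×ˢ {0}ᶜ ×ˢ {0}ᶜ : Set (ZMod 2 × A × B)) ⊆
      Subtype.val '' pendantSet (zdGraph (ZMod 2 × A × B)) (vertex100 (ZMod 2) A B) := by
    rintro ⟨_, a, b⟩ ⟨rfl, ha, hb⟩
    have ha : a ≠ 0 := ha
    exact ⟨⟨(0, a, b), by simp [ha], (1, 0, 0), by simp, by simp⟩,
      mem_pendantSet_vertex100 ha hb rfl, rfl⟩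
  calc (Nat.card A - 1) * (Nat.card B - 1)
      = ({0} ×ˢ {0}ᶜ ×ˢ {0}ᶜ : Set (ZMod 2 × A × B)).ncard := by
        rw [Set.ncard_prod, Set.ncard_prod, Set.ncard_singleton, one_mul, Set.ncard_compl,
          Set.ncard_compl, Set.ncard_singleton, Set.ncard_singleton]
    _ ≤ _ := Set.ncard_le_ncard hsub
    _ = _ := Set.ncard_image_of_injective _ Subtype.val_injective

end PendantVertices

lemma mul_lt_two_mul_sub_one_mul_sub_one_add_two {m n : ℕ} (hm : 2 ≤ m) (hn : 2 ≤ n) :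
    m * n < 2 * ((m - 1) * (n - 1) + 2) := by
  obtain ⟨i, rfl⟩ := Nat.exists_eq_add_of_le' hm
  obtain ⟨j, rfl⟩ := Nat.exists_eq_add_of_le' hn
  calc (i + 2) * (j + 2) < (i + 2) * (j + 2) + (i * j + 2) := by lia
    _ = 2 * ((i + 1) * (j + 1) + 2) := by ring

/-- For finite fields `F`, `K` with `|F|, |K| ≥ 3`, `Γ(ℤ₂ × F × K)` is not
partitionable into global defensive alliances. -/
theorem stmt14 (F K : Type*) [Field F] [Finite F] [Field K] [Finite K]
    (hF : 3 ≤ Nat.card F) (hK : 3 ≤ Nat.card K) :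
    ¬ PartitionableGDA (zdGraph (ZMod 2 × F × K)) := by
  have hdeg100 := ncard_neighborSet_vertex100_add_one (ZMod 2) F K
  have hdeg110 := ncard_neighborSet_vertex110_add_one (ZMod 2) F K
  have hdeg101 := ncard_neighborSet_vertex101_add_one (ZMod 2) F K
  have hdisj := disjoint_neighborSet_vertex110_vertex101 (ZMod 2) F K
  refine not_partitionableGDA_of_ncard_neighborSet_lt (v := vertex100 (ZMod 2) F K)
    (D := {vertex110 (ZMod 2) F K, vertex101 (ZMod 2) F K}) ?_ ?_ ?_ ?_ ?_
  · rintro (h | h)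
    exacts [vertex100_ne_vertex110 _ _ _ h, vertex100_ne_vertex101 _ _ _ h]
  · rintro _ (rfl | rfl)
    exacts [neighborSet_vertex110_subset .., neighborSet_vertex101_subset ..]
  · rintro _ (rfl | rfl) <;> lia
  · exact Set.pairwise_pair.2 fun _ => ⟨hdisj, hdisj.symm⟩
  · have hpendant := card_sub_one_mul_card_sub_one_le_ncard_pendantSet (A := F) (B := K)
    have hlt : Nat.card F * Nat.card K < 2 * ((Nat.card F - 1) * (Nat.card K - 1) + 2) :=
      mul_lt_two_mul_sub_one_mul_sub_one_add_two (by lia) (by lia)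
    rw [Set.ncard_pair (vertex110_ne_vertex101 _ _ _)]
    lia
end
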